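/- arXiv:2601.21580 — 2 statements merged into one kernel-verified Lean document; each statement's English description precedes it below -/
import Mathlib

section
/- Let T be a finite tree with at least two vertices. If T is not a path, then its metric dimension satisfies μ(T) = σ(T) − ex(T), where σ(T) is the number of leaves of T and ex(T) is the number of exterior major vertices of T. If T is a path, then μ(T) = 1. -/
open SimpleGraph

variable {V : Type*}

/-- `S` is a doubly resolving set of `G`: every pair of distinct vertices is doubly
resolved by some pair of vertices of `S`. -/
def IsDoublyResolvingSet (G : SimpleGraph V) (S : Set V) : Prop :=
  ∀ u v : V, u ≠ v → ∃ x ∈ S, ∃ y ∈ S,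
    (G.dist u x : ℤ) - (G.dist u y : ℤ) ≠ (G.dist v x : ℤ) - (G.dist v y : ℤ)

/-- `Ψ(G)`: the minimum cardinality of a doubly resolving set of `G`. -/
noncomputable def psi (G : SimpleGraph V) : ℕ :=
  sInf {n | ∃ S : Set V, IsDoublyResolvingSet G S ∧ S.ncard = n}

/-- The degree of a vertex, as the cardinality of its neighbor set. -/
noncomputable def deg (G : SimpleGraph V) (v : V) : ℕ := (G.neighborSet v).ncard

/-- The maximum degree `Δ(G)`. -/
noncomputable def maxDeg (G : SimpleGraph V) : ℕ := sSup (Set.range (deg G))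
/-- `S` is a resolving set of `G`. -/
def IsResolvingSet (G : SimpleGraph V) (S : Set V) : Prop :=
  ∀ u v : V, u ≠ v → ∃ x ∈ S, G.dist u x ≠ G.dist v x

/-- `μ(G)`: the metric dimension of `G`, i.e., the minimum cardinality of a resolving set. -/
noncomputable def metricDim (G : SimpleGraph V) : ℕ :=
  sInf {n | ∃ S : Set V, IsResolvingSet G S ∧ S.ncard = n}

section Helpers
variable {T : SimpleGraph V}

/-- The branch at `m` in the direction of `a`. -/
def br (T : SimpleGraph V) (m a : V) : Set V := {x | T.dist x a < T.dist x m}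

lemma path_len (hT : T.IsTree) {u v : V} (p : T.Walk u v) (hp : p.IsPath) :
    p.length = T.dist u v := by
  obtain ⟨q, hq, hl⟩ := hT.1.exists_path_of_dist u v
  rw [← hl, (hT.existsUnique_path u v).unique hp hq]

lemma adj_dist (hT : T.IsTree) {a m : V} (h : T.Adj m a) (x : V) :
    T.dist x a = T.dist x m + 1 ∨ T.dist x m = T.dist x a + 1 := by
  have := hT.dist_eq_dist_add_one_of_adj x h
  tauto

lemma sub_br (hT : T.IsTree) {m a x : V} (h : T.Adj m a) (hx : x ∈ br T m a)
    (p : T.Walk x a) (hp : p.length = T.dist x a) : ∀ y ∈ p.support, y ∈ br T m a := by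
  classical
  intro y hy
  have h1 := congrArg Walk.length (p.take_spec hy)
  rw [Walk.length_append] at h1
  have h2 := dist_le (p.takeUntil y hy)
  have h3 := dist_le (p.dropUntil y hy)
  have h4 := hT.1.dist_triangle (u := x) (v := y) (w := m)
  simp only [br, Set.mem_ofPred_eq] at *
  omega

lemma cut (hT : T.IsTree) {m a x v : V} (h : T.Adj m a) (hx : x ∈ br T m a)
    (hv : v ∉ br T m a) : T.dist x v = T.dist x m + T.dist m v := by
  have hv' : v ∈ br T a m := by
    have := adj_dist hT h v
    simp only [br, Set.mem_ofPred_eq] at *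
    omega
  obtain ⟨p, hp, hpl⟩ := hT.1.exists_path_of_dist x a
  obtain ⟨q, hq, hql⟩ := hT.1.exists_path_of_dist v m
  have hps := sub_br hT h hx p hpl
  have hqs := sub_br hT h.symm hv' q hql
  have hpath : (p.append (Walk.cons h.symm q.reverse)).IsPath := by
    rw [Walk.isPath_def, Walk.support_append]
    simp only [Walk.support_cons, List.tail_cons, Walk.support_reverse]
    rw [List.nodup_append]
    refine ⟨hp.support_nodup, by simpa using hq.support_nodup, ?_⟩
    rintro y hy z hz rfl
    have h1 := hps y hy
    have h2 := hqs y (by simpa using hz)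
    simp only [br, Set.mem_ofPred_eq] at h1 h2
    omega
  have := path_len hT _ hpath
  rw [Walk.length_append, Walk.length_cons, Walk.length_reverse, hpl, hql] at this
  have h5 := adj_dist hT h x
  rw [T.dist_comm (u := m)]
  simp only [br, Set.mem_ofPred_eq] at *
  omega

lemma m_notin (T : SimpleGraph V) (m a : V) : m ∉ br T m a := by simp [br]

lemma nb_in {m a : V} (h : T.Adj m a) : a ∈ br T m a := by
  have : T.dist a m = 1 := dist_eq_one_iff_adj.2 h.symm
  simp [br, this]

lemma br_uniq (hT : T.IsTree) {m a b x : V} (ha : T.Adj m a) (hb : T.Adj m b)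
    (hxa : x ∈ br T m a) (hxb : x ∈ br T m b) : a = b := by
  by_contra hne
  have h1 : T.dist b m = 1 := dist_eq_one_iff_adj.2 hb.symm
  have h0 : T.dist b a ≠ 0 := fun h => hne ((hT.1.dist_eq_zero_iff).1 h).symm
  have h2 : b ∉ br T m a := by
    simp only [br, Set.mem_ofPred_eq]; omega
  have := cut hT ha hxa h2
  simp only [br, Set.mem_ofPred_eq] at *
  omega

/-- step from `x` towards `m` -/
lemma toward (hT : T.IsTree) {x m : V} (h : x ≠ m) :
    ∃ a, T.Adj x a ∧ T.dist x m = T.dist a m + 1 := by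
  obtain ⟨p, hp⟩ := hT.1.exists_walk_length_eq_dist x m
  cases p with
  | nil => exact absurd rfl h
  | @cons _ y _ hxy q =>
    refine ⟨y, hxy, ?_⟩
    rw [Walk.length_cons] at hp
    have := dist_le q
    have h2 := adj_dist hT hxy m
    rw [T.dist_comm (u := m), T.dist_comm (u := m)] at h2
    omega

lemma ex_br (hT : T.IsTree) {x m : V} (h : x ≠ m) : ∃ a, T.Adj m a ∧ x ∈ br T m a := by
  obtain ⟨a, h1, h2⟩ := toward hT h.symm
  refine ⟨a, h1, ?_⟩
  simp only [br, Set.mem_ofPred_eq]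
  rw [T.dist_comm (u := x), T.dist_comm (u := x)]
  omega

lemma toward_uniq (hT : T.IsTree) {x m a b : V} (ha : T.Adj x a) (hb : T.Adj x b)
    (h1 : T.dist x m = T.dist a m + 1) (h2 : T.dist x m = T.dist b m + 1) : a = b := by
  apply br_uniq hT ha hb (x := m) <;> simp only [br, Set.mem_ofPred_eq]
  · rw [T.dist_comm (u := m), T.dist_comm (u := m)]; omega
  · rw [T.dist_comm (u := m), T.dist_comm (u := m)]; omega

lemma br_nest (hT : T.IsTree) {m a w b : V} (hb : T.Adj w b)
    (hw : w ∈ br T m a) (hm : m ∉ br T w b) : br T w b ⊆ br T m a := by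
  intro x hx
  have h1 := cut hT hb hx hm
  have h2 := hT.1.dist_triangle (u := x) (v := w) (w := a)
  simp only [br, Set.mem_ofPred_eq] at *
  omega

lemma leaf_eq {u a b : V} (h : deg T u = 1) (ha : T.Adj u a) (hb : T.Adj u b) : a = b := by
  obtain ⟨c, hc⟩ := Set.ncard_eq_one.1 h
  have h1 : a ∈ T.neighborSet u := ha
  have h2 : b ∈ T.neighborSet u := hb
  rw [hc] at h1 h2
  simp at h1 h2
  rw [h1, h2]

variable [Fintype V]

lemma deg_three {u a b c : V} (ha : T.Adj u a) (hb : T.Adj u b) (hc : T.Adj u c)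
    (h1 : a ≠ b) (h2 : a ≠ c) (h3 : b ≠ c) : 3 ≤ deg T u :=
  (Set.two_lt_ncard_iff (Set.toFinite _)).2 ⟨a, b, c, ha, hb, hc, h1, h2, h3⟩

lemma three_deg {u : V} (h : 3 ≤ deg T u) (p : V) :
    ∃ a b, T.Adj u a ∧ T.Adj u b ∧ a ≠ b ∧ a ≠ p ∧ b ≠ p := by
  obtain ⟨a, b, c, ha, hb, hc, h1, h2, h3⟩ := (Set.two_lt_ncard_iff (Set.toFinite _)).1 h
  by_cases hap : a = p
  · exact ⟨b, c, hb, hc, h3, fun h => h1 (hap.trans h.symm), fun h => h2 (hap.trans h.symm)⟩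
  · by_cases hbp : b = p
    · exact ⟨a, c, ha, hc, h2, hap, fun h => h3 (hbp.trans h.symm)⟩
    · exact ⟨a, b, ha, hb, h1, hap, hbp⟩

lemma br_leaf (hT : T.IsTree) {m a : V} (h : T.Adj m a) :
    ∃ u ∈ br T m a, deg T u = 1 := by
  obtain ⟨x, hx, hmax⟩ := Set.exists_max_image (br T m a) (fun x => T.dist x m)
    (Set.toFinite _) ⟨a, nb_in h⟩
  refine ⟨x, hx, ?_⟩
  have hne : x ≠ m := fun e => m_notin T m a (e ▸ hx)
  obtain ⟨p, hp, hpd⟩ := toward hT hne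
  refine Set.ncard_eq_one.2 ⟨p, ?_⟩
  ext y
  simp only [mem_neighborSet, Set.mem_singleton_iff]
  refine ⟨fun hy => ?_, fun e => e ▸ hp⟩
  have h1 := adj_dist hT hy m
  rw [T.dist_comm (u := m), T.dist_comm (u := m)] at h1
  rcases h1 with h1 | h1
  · exfalso
    have h2 := adj_dist hT hy a
    rw [T.dist_comm (u := a), T.dist_comm (u := a)] at h2
    have : y ∈ br T m a := by
      simp only [br, Set.mem_ofPred_eq] at *
      omega
    have := hmax y this
    omega
  · exact toward_uniq hT hy hp h1 hpd

lemma leg (hT : T.IsTree) {u v a : V} (hu : deg T u = 1)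
    (hmin : ∀ w, 3 ≤ deg T w → T.dist u v ≤ T.dist u w) (ha : T.Adj v a)
    (hua : u ∈ br T v a) : ∀ n x, T.dist x v = n → x ∈ br T v a →
      T.dist u x + T.dist x v = T.dist u v := by
  intro n
  induction n with
  | zero =>
    intro x hx hxa
    rw [hT.1.dist_eq_zero_iff] at hx
    subst hx
    exact absurd hxa (m_notin T _ _)
  | succ n ih =>
    intro x hx hxa
    have hne : x ≠ v := fun e => m_notin T v a (e ▸ hxa)
    obtain ⟨x', hxx, hd⟩ := toward hT hne
    by_cases hv : x' = v
    · subst hv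
      have hax : x = a := br_uniq hT hxx.symm ha (nb_in hxx.symm) hxa
      subst hax
      have h2 := adj_dist hT ha u
      simp only [br, Set.mem_ofPred_eq, dist_self] at *
      omega
    · have hx'a : x' ∈ br T v a := by
        by_contra hcon
        have := cut hT ha hxa hcon
        have h11 : T.dist x x' = 1 := dist_eq_one_iff_adj.2 hxx
        have h0 : T.dist v x' ≠ 0 := fun h => hv ((hT.1.dist_eq_zero_iff).1 h).symm
        omega
      have h1 := ih x' (by omega) hx'a
      obtain ⟨p, hp, hpd⟩ := toward hT hv
      have hpx : p ≠ x := by rintro rfl; omega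
      by_cases hxu : x' = u
      · subst hxu
        exact absurd (leaf_eq hu hp hxx.symm) hpx
      · obtain ⟨q, hq, hqd⟩ := toward hT hxu
        have h0 : T.dist x' v ≠ 0 := fun h => hv ((hT.1.dist_eq_zero_iff).1 h)
        have htri := hT.1.dist_triangle (u := u) (v := q) (w := v)
        have e1 := T.dist_comm (u := u) (v := q)
        have e2 := T.dist_comm (u := u) (v := x')
        have hpq : p ≠ q := by rintro rfl; omega
        by_cases hqx : q = x
        · subst hqx; omega
        · exfalso
          have := hmin x' (deg_three hp hq hxx.symm hpq hpx hqx)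
          omega

lemma leg_nomajor (hT : T.IsTree) {u v a : V} (hu : deg T u = 1)
    (hmin : ∀ w, 3 ≤ deg T w → T.dist u v ≤ T.dist u w) (ha : T.Adj v a)
    (hua : u ∈ br T v a) {x : V} (hx : x ∈ br T v a) : ¬ 3 ≤ deg T x := by
  intro h3
  have h1 := leg hT hu hmin ha hua _ x rfl hx
  have h2 := hmin x h3
  simp only [br, Set.mem_ofPred_eq] at hx
  omega

/-- leaves in major-free branches are terminal -/
lemma term_of_nomajor (hT : T.IsTree) {u v a : V} (ha : T.Adj v a)
    (hua : u ∈ br T v a) (hno : ∀ x ∈ br T v a, ¬ 3 ≤ deg T x) (w : V) (hw : 3 ≤ deg T w)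
    (hne : w ≠ v) : T.dist u v < T.dist u w := by
  have := cut hT ha hua (v := w) (fun h => hno w h hw)
  have h0 : T.dist v w ≠ 0 := fun h => hne ((hT.1.dist_eq_zero_iff).1 h).symm
  omega

lemma leg_leaf_uniq (hT : T.IsTree) {u u' v a : V} (hu : deg T u = 1) (hu' : deg T u' = 1)
    (hmin : ∀ w, 3 ≤ deg T w → T.dist u v ≤ T.dist u w) (ha : T.Adj v a)
    (hua : u ∈ br T v a) (hua' : u' ∈ br T v a) : u = u' := by
  have hmin' : ∀ w, 3 ≤ deg T w → T.dist u' v ≤ T.dist u' w := by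
    intro w hw
    by_cases e : w = v
    · rw [e]
    · exact (term_of_nomajor hT ha hua' (fun x hx => leg_nomajor hT hu hmin ha hua hx) w hw e).le
  have h1 := leg hT hu hmin ha hua _ u' rfl hua'
  have h2 := leg hT hu' hmin' ha hua' _ u rfl hua
  rw [← hT.1.dist_eq_zero_iff]
  have e2 := T.dist_comm (u := u) (v := u')
  omega

lemma lower (hT : T.IsTree) (hM : ∃ m, 3 ≤ deg T m) (S : Set V) (hS : IsResolvingSet T S) :
    {v : V | deg T v = 1}.ncard ≤ S.ncard + {v : V | 3 ≤ deg T v ∧ ∃ u : V, deg T u = 1 ∧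
            ∀ w : V, 3 ≤ deg T w → w ≠ v → T.dist u v < T.dist u w}.ncard := by
  classical
  have key : ∀ u : V, ∃ v a, deg T u = 1 → 3 ≤ deg T v ∧
      (∀ w, 3 ≤ deg T w → T.dist u v ≤ T.dist u w) ∧ T.Adj v a ∧ u ∈ br T v a := by
    intro u
    by_cases hu : deg T u = 1
    · obtain ⟨v, hv, hmin⟩ := Set.exists_min_image {w | 3 ≤ deg T w} (fun w => T.dist u w)
        (Set.toFinite _) hM
      have hne : u ≠ v := by rintro rfl; simp only [Set.mem_ofPred_eq] at hv; omega
      obtain ⟨a, h1, h2⟩ := ex_br hT hne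
      exact ⟨v, a, fun _ => ⟨hv, hmin, h1, h2⟩⟩
    · exact ⟨u, u, fun h => absurd h hu⟩
  choose τ α h using key
  set L := {v : V | deg T v = 1} with hL
  set E := {v : V | 3 ≤ deg T v ∧ ∃ u : V, deg T u = 1 ∧
            ∀ w : V, 3 ≤ deg T w → w ≠ v → T.dist u v < T.dist u w} with hE
  set P : V → Prop := fun u => ∃ s, s ∈ S ∧ s ∈ br T (τ u) (α u) with hP
  have hnm : ∀ u, deg T u = 1 → ∀ x ∈ br T (τ u) (α u), ¬ 3 ≤ deg T x := by
    intro u hu x hx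
    obtain ⟨h1, h2, h3, h4⟩ := h u hu
    exact leg_nomajor hT hu h2 h3 h4 hx
  have huniq : ∀ u u', deg T u = 1 → deg T u' = 1 → τ u = τ u' → α u = α u' → u = u' := by
    intro u u' hu hu' e1 e2
    obtain ⟨h1, h2, h3, h4⟩ := h u hu
    obtain ⟨h1', h2', h3', h4'⟩ := h u' hu'
    rw [← e1, ← e2] at h4'
    exact leg_leaf_uniq hT hu hu' h2 h3 h4 h4'
  have hsplit : L ⊆ (L ∩ {u | P u}) ∪ (L ∩ {u | ¬ P u}) := by
    intro u hu
    by_cases hp : P u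
    · exact Or.inl ⟨hu, hp⟩
    · exact Or.inr ⟨hu, hp⟩
  have hA : (L ∩ {u | P u}).ncard ≤ S.ncard := by
    have : ∀ u, ∃ s, P u → s ∈ S ∧ s ∈ br T (τ u) (α u) := by
      intro u
      by_cases hp : P u
      · obtain ⟨s, hs⟩ := hp
        exact ⟨s, fun _ => hs⟩
      · exact ⟨u, fun hq => absurd hq hp⟩
    choose f hf using this
    refine Set.ncard_le_ncard_of_injOn f (fun u hu => (hf u hu.2).1) ?_ (Set.toFinite _)
    intro u hu u' hu' heq
    have g1 := (hf u hu.2).2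
    have g2 := (hf u' hu'.2).2
    rw [← heq] at g2
    obtain ⟨h1, h2, h3, h4⟩ := h u hu.1
    obtain ⟨h1', h2', h3', h4'⟩ := h u' hu'.1
    by_cases e : τ u = τ u'
    · refine huniq u u' hu.1 hu'.1 e ?_
      rw [← e] at g2 h3'
      exact br_uniq hT h3 h3' g1 g2
    · exfalso
      have c1 := cut hT h3 g1 (fun hc => hnm u hu.1 _ hc h1')
      have c2 := cut hT h3' g2 (fun hc => hnm u' hu'.1 _ hc h1)
      have h0 : T.dist (τ u) (τ u') ≠ 0 := fun h => e ((hT.1.dist_eq_zero_iff).1 h)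
      omega
  have hB : (L ∩ {u | ¬ P u}).ncard ≤ E.ncard := by
    refine Set.ncard_le_ncard_of_injOn τ ?_ ?_ (Set.toFinite _)
    · intro u hu
      obtain ⟨h1, h2, h3, h4⟩ := h u hu.1
      exact ⟨h1, u, hu.1, term_of_nomajor hT h3 h4 (hnm u hu.1)⟩
    · intro u hu u' hu' e
      obtain ⟨h1, h2, h3, h4⟩ := h u hu.1
      obtain ⟨h1', h2', h3', h4'⟩ := h u' hu'.1
      refine huniq u u' hu.1 hu'.1 e ?_
      by_contra hne
      obtain ⟨x, hxS, hx⟩ := hS _ _ hne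
      have n1 : x ∉ br T (τ u) (α u) := fun hc => hu.2 ⟨x, hxS, hc⟩
      have n2 : x ∉ br T (τ u') (α u') := fun hc => hu'.2 ⟨x, hxS, hc⟩
      have d1 := adj_dist hT h3 x
      have d2 := adj_dist hT h3' x
      simp only [br, Set.mem_ofPred_eq] at n1 n2
      rw [T.dist_comm (v := x), T.dist_comm (v := x)] at hx
      rw [← e] at d2 n2
      omega
  calc L.ncard ≤ _ := Set.ncard_le_ncard hsplit (Set.toFinite _)
    _ ≤ _ := Set.ncard_union_le _ _
    _ ≤ _ := by omega

lemma midpt (hT : T.IsTree) (k l : ℕ) : ∀ u v : V, T.dist u v = k + l →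
    ∃ m, T.dist u m = k ∧ T.dist m v = l := by
  induction k with
  | zero => intro u v h; exact ⟨u, by simp, by omega⟩
  | succ k ih =>
    intro u v h
    have hne : u ≠ v := by
      rintro rfl
      rw [dist_self] at h
      omega
    obtain ⟨a, ha, hd⟩ := toward hT hne
    obtain ⟨m, h1, h2⟩ := ih a v (by omega)
    refine ⟨m, ?_, h2⟩
    have t1 := hT.1.dist_triangle (u := u) (v := m) (w := v)
    have t2 := hT.1.dist_triangle (u := u) (v := a) (w := m)
    have : T.dist u a = 1 := dist_eq_one_iff_adj.2 ha
    omega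

lemma parity (hT : T.IsTree) (x : V) : ∀ n (u v : V), T.dist u v = n →
    (T.dist u x + T.dist v x + n) % 2 = 0 := by
  intro n
  induction n with
  | zero =>
    intro u v h
    rw [hT.1.dist_eq_zero_iff] at h
    subst h; omega
  | succ n ih =>
    intro u v h
    have hne : u ≠ v := by rintro rfl; simp at h
    obtain ⟨a, ha, hd⟩ := toward hT hne
    have h1 := ih a v (by omega)
    have h2 := adj_dist hT ha x
    rw [T.dist_comm (u := x), T.dist_comm (u := x)] at h2
    omega

lemma resolving_of (hT : T.IsTree) (S : Set V) (hne : S.Nonempty)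
    (hS : ∀ m a b, T.Adj m a → T.Adj m b → a ≠ b → ∃ x ∈ S, x ∈ br T m a ∨ x ∈ br T m b) :
    IsResolvingSet T S := by
  intro u v huv
  rcases Nat.even_or_odd' (T.dist u v) with ⟨k, hk | hk⟩
  · obtain ⟨m, h1, h2⟩ := midpt hT k k u v (by omega)
    have h0 : T.dist u v ≠ 0 := fun h => huv ((hT.1.dist_eq_zero_iff).1 h)
    have hmu : m ≠ u := by rintro rfl; simp at h1; omega
    have hmv : m ≠ v := by rintro rfl; simp at h2; omega
    obtain ⟨a, ha, had⟩ := toward hT hmu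
    obtain ⟨b, hb, hbd⟩ := toward hT hmv
    have e1 := T.dist_comm (u := u) (v := m)
    have e2 := T.dist_comm (u := u) (v := a)
    have e3 := T.dist_comm (u := v) (v := m)
    have e4 := T.dist_comm (u := v) (v := b)
    have hab : a ≠ b := by
      rintro rfl
      have := hT.1.dist_triangle (u := u) (v := a) (w := v)
      omega
    have hua : u ∈ br T m a := by simp only [br, Set.mem_ofPred_eq]; omega
    have hvb : v ∈ br T m b := by simp only [br, Set.mem_ofPred_eq]; omega
    have hub : u ∉ br T m b := fun h => hab (br_uniq hT ha hb hua h)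
    have hva : v ∉ br T m a := fun h => hab (br_uniq hT ha hb h hvb)
    obtain ⟨x, hxS, hx⟩ := hS m a b ha hb hab
    refine ⟨x, hxS, ?_⟩
    have f1 := T.dist_comm (u := u) (v := x)
    have f2 := T.dist_comm (u := v) (v := x)
    rcases hx with hx | hx
    · have c := cut hT ha hx hva
      have t := hT.1.dist_triangle (u := x) (v := a) (w := u)
      simp only [br, Set.mem_ofPred_eq] at hx
      omega
    · have c := cut hT hb hx hub
      have t := hT.1.dist_triangle (u := x) (v := b) (w := v)
      simp only [br, Set.mem_ofPred_eq] at hx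
      omega
  · obtain ⟨x, hx⟩ := hne
    refine ⟨x, hx, ?_⟩
    have := parity hT x _ u v hk
    omega

lemma upper (hT : T.IsTree) (hM : ∃ m, 3 ≤ deg T m) :
    ∃ S : Set V, IsResolvingSet T S ∧ S.ncard =
    {v : V | deg T v = 1}.ncard - {v : V | 3 ≤ deg T v ∧ ∃ u : V, deg T u = 1 ∧
            ∀ w : V, 3 ≤ deg T w → w ≠ v → T.dist u v < T.dist u w}.ncard := by
  classical
  set L := {v : V | deg T v = 1} with hL
  set E := {v : V | 3 ≤ deg T v ∧ ∃ u : V, deg T u = 1 ∧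
            ∀ w : V, 3 ≤ deg T w → w ≠ v → T.dist u v < T.dist u w} with hE
  have : ∀ v, ∃ u, v ∈ E → deg T u = 1 ∧
            ∀ w : V, 3 ≤ deg T w → w ≠ v → T.dist u v < T.dist u w := by
    intro v
    by_cases hv : v ∈ E
    · obtain ⟨u, hu⟩ := hv.2
      exact ⟨u, fun _ => hu⟩
    · exact ⟨v, fun h => absurd h hv⟩
  choose c hc using this
  have hinj : ∀ v v' u, 3 ≤ deg T v → 3 ≤ deg T v' →
      (∀ w : V, 3 ≤ deg T w → w ≠ v → T.dist u v < T.dist u w) →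
      (∀ w : V, 3 ≤ deg T w → w ≠ v' → T.dist u v' < T.dist u w) → v = v' := by
    intro v v' u h1 h2 h3 h4
    by_contra hne
    have := h3 v' h2 (Ne.symm hne)
    have := h4 v h1 hne
    omega
  have hcard : (c '' E).ncard = E.ncard := by
    apply Set.ncard_image_of_injOn
    intro v hv v' hv' e
    refine hinj v v' (c v) hv.1 hv'.1 (hc v hv).2 ?_
    rw [e]; exact (hc v' hv').2
  have hsub : c '' E ⊆ L := by
    rintro _ ⟨v, hv, rfl⟩
    exact (hc v hv).1
  -- two major-free branches
  have K : ∀ m a b, T.Adj m a → T.Adj m b → a ≠ b → (∀ x ∈ br T m a, ¬ 3 ≤ deg T x) →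
      (∀ x ∈ br T m b, ¬ 3 ≤ deg T x) →
      ∃ x ∈ L \ c '' E, x ∈ br T m a ∨ x ∈ br T m b := by
    intro m a b ha hb hab na nb
    have hm : 3 ≤ deg T m := by
      obtain ⟨w, hw⟩ := hM
      by_cases e : w = m
      · rw [← e]; exact hw
      · obtain ⟨d, hd, hwd⟩ := ex_br hT e
        refine deg_three ha hb hd hab ?_ ?_
        · rintro rfl; exact na w hwd hw
        · rintro rfl; exact nb w hwd hw
    obtain ⟨u, hu, hul⟩ := br_leaf hT ha
    obtain ⟨u', hu', hul'⟩ := br_leaf hT hb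
    by_cases hcu : u ∈ c '' E
    · by_cases hcu' : u' ∈ c '' E
      · exfalso
        obtain ⟨v, hv, e⟩ := hcu
        obtain ⟨v', hv', e'⟩ := hcu'
        have g1 := (hc v hv).2
        have g2 := (hc v' hv').2
        rw [e] at g1
        rw [e'] at g2
        have e1 := hinj v m u hv.1 hm g1 (term_of_nomajor hT ha hu na)
        have e2 := hinj v' m u' hv'.1 hm g2 (term_of_nomajor hT hb hu' nb)
        have : u = u' := by rw [← e, ← e', e1, e2]
        subst this
        exact hab (br_uniq hT ha hb hu hu')
      · exact ⟨u', ⟨hul', hcu'⟩, Or.inr hu'⟩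
    · exact ⟨u, ⟨hul, hcu⟩, Or.inl hu⟩
  have K2 : ∀ m a, T.Adj m a → (∃ x ∈ br T m a, 3 ≤ deg T x) →
      ∃ x ∈ L \ c '' E, x ∈ br T m a := by
    intro m a ha hex
    obtain ⟨w, ⟨hw, hw3⟩, hmax⟩ := Set.exists_max_image {x | x ∈ br T m a ∧ 3 ≤ deg T x}
      (fun x => T.dist x m) (Set.toFinite _) hex
    have hne : m ≠ w := by rintro rfl; exact m_notin T _ _ hw
    obtain ⟨p, hp, hmp⟩ := ex_br hT hne
    obtain ⟨d, e, hd, he, hde, hdp, hep⟩ := three_deg hw3 p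
    have hmd : m ∉ br T w d := fun h => hdp (br_uniq hT hd hp h hmp)
    have hme : m ∉ br T w e := fun h => hep (br_uniq hT he hp h hmp)
    have aux : ∀ d, T.Adj w d → m ∉ br T w d → ∀ x ∈ br T w d, ¬ 3 ≤ deg T x := by
      intro d hd hmd x hx hx3
      have h1 := hmax x ⟨br_nest hT hd hw hmd hx, hx3⟩
      have h2 := cut hT hd hx hmd
      simp only [br, Set.mem_ofPred_eq] at hx h1
      omega
    obtain ⟨x, hxS, hx⟩ := K w d e hd he hde (aux d hd hmd) (aux e he hme)
    refine ⟨x, hxS, ?_⟩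
    rcases hx with hx | hx
    · exact br_nest hT hd hw hmd hx
    · exact br_nest hT he hw hme hx
  have K3 : ∀ m a b, T.Adj m a → T.Adj m b → a ≠ b →
      ∃ x ∈ L \ c '' E, x ∈ br T m a ∨ x ∈ br T m b := by
    intro m a b ha hb hab
    by_cases h1 : ∃ x ∈ br T m a, 3 ≤ deg T x
    · obtain ⟨x, hx, hxa⟩ := K2 m a ha h1
      exact ⟨x, hx, Or.inl hxa⟩
    by_cases h2 : ∃ x ∈ br T m b, 3 ≤ deg T x
    · obtain ⟨x, hx, hxa⟩ := K2 m b hb h2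
      exact ⟨x, hx, Or.inr hxa⟩
    push Not at h1 h2
    exact K m a b ha hb hab (fun x hx => not_le.2 (h1 x hx)) (fun x hx => not_le.2 (h2 x hx))
  refine ⟨L \ c '' E, resolving_of hT _ ?_ K3, ?_⟩
  · obtain ⟨m, hm⟩ := hM
    obtain ⟨a, b, ha, hb, hab, -⟩ := three_deg hm m
    obtain ⟨x, hx, -⟩ := K3 m a b ha hb hab
    exact ⟨x, hx⟩
  · rw [Set.ncard_diff hsub, hcard]

lemma dist_inj (hT : T.IsTree) (hM : ∀ m, ¬ 3 ≤ deg T m) {r : V} (hr : deg T r = 1) :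
    ∀ n x y, T.dist x r = n → T.dist y r = n → x = y := by
  intro n
  induction n with
  | zero =>
    intro x y hx hy
    rw [hT.1.dist_eq_zero_iff] at hx hy
    rw [hx, hy]
  | succ n ih =>
    intro x y hx hy
    have hxr : x ≠ r := by rintro rfl; simp at hx
    have hyr : y ≠ r := by rintro rfl; simp at hy
    obtain ⟨x', hxx, hxd⟩ := toward hT hxr
    obtain ⟨y', hyy, hyd⟩ := toward hT hyr
    obtain rfl := ih x' y' (by omega) (by omega)
    by_cases e : x' = r
    · subst e
      exact leaf_eq hr hxx.symm hyy.symm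
    · obtain ⟨z, hz, hzd⟩ := toward hT e
      by_contra hne
      refine hM x' (deg_three hxx.symm hyy.symm hz hne ?_ ?_)
      · rintro rfl; omega
      · rintro rfl; omega

lemma ex_leaf (hT : T.IsTree) (hcard : 2 ≤ Fintype.card V) : ∃ r, deg T r = 1 := by
  obtain ⟨x, y, hxy⟩ := Fintype.one_lt_card_iff.1 hcard
  obtain ⟨a, ha, -⟩ := toward hT hxy
  obtain ⟨r, -, hr⟩ := br_leaf hT ha
  exact ⟨r, hr⟩

lemma path_of (hT : T.IsTree) (hcard : 2 ≤ Fintype.card V) (hM : ∀ m, ¬ 3 ≤ deg T m) :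
    ∃ n : ℕ, Nonempty (T ≃g pathGraph n) := by
  obtain ⟨r, hr⟩ := ex_leaf hT hcard
  have hlt : ∀ v, T.dist v r < Fintype.card V := by
    intro v
    obtain ⟨p, hp, hl⟩ := hT.1.exists_path_of_dist v r
    rw [← hl]
    exact hp.length_lt
  let f : V → Fin (Fintype.card V) := fun v => ⟨T.dist v r, hlt v⟩
  have hf : Function.Injective f := by
    intro x y h
    exact dist_inj hT hM hr _ x y rfl (Fin.mk.inj_iff.1 h).symm
  have hb : Function.Bijective f := (Fintype.bijective_iff_injective_and_card f).2 ⟨hf, by simp⟩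
  have hback : ∀ x y, T.dist x r + 1 = T.dist y r → T.Adj x y := by
    intro x y h
    have hy : y ≠ r := by rintro rfl; simp at h
    obtain ⟨z, hz, hzd⟩ := toward hT hy
    obtain rfl := dist_inj hT hM hr _ z x rfl (by omega)
    exact hz.symm
  refine ⟨Fintype.card V, ⟨⟨Equiv.ofBijective f hb, ?_⟩⟩⟩
  intro x y
  rw [pathGraph_adj]
  simp only [Equiv.ofBijective_apply, f]
  constructor
  · rintro (h | h)
    · exact hback x y h
    · exact (hback y x h).symm
  · intro h
    have := adj_dist hT h r
    rw [T.dist_comm (u := r), T.dist_comm (u := r)] at this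
    omega

lemma nomajor_of_path {n : ℕ} (f : T ≃g pathGraph n) : ∀ m, ¬ 3 ≤ deg T m := by
  intro m hm
  obtain ⟨a, b, c, ha, hb, hc, h1, h2, h3⟩ := (Set.two_lt_ncard_iff (Set.toFinite _)).1 hm
  have key : ∀ x, x ∈ T.neighborSet m → (f m).val + 1 = (f x).val ∨ (f x).val + 1 = (f m).val := by
    intro x hx
    have := f.map_adj_iff.2 hx
    rwa [pathGraph_adj] at this
  have ne : ∀ x y, x ≠ y → (f x).val ≠ (f y).val := by
    intro x y hxy h
    exact hxy (f.injective (Fin.ext h))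
  have := key a ha
  have := key b hb
  have := key c hc
  have := ne a b h1
  have := ne a c h2
  have := ne b c h3
  omega

end Helpers

/-- Let `T` be a finite tree with at least two vertices. If `T` is not a path,
then `μ(T) = σ(T) - ex(T)`, where `σ(T)` is the number of leaves of `T` and `ex(T)` is the
number of exterior major vertices of `T` (major vertices having at least one terminal
vertex, i.e., a leaf strictly closer to it than to every other major vertex).
If `T` is a path, then `μ(T) = 1`. -/
theorem metricDim_tree {V : Type*} [Fintype V] (T : SimpleGraph V)
    (hT : T.IsTree) (hcard : 2 ≤ Fintype.card V) :
    (¬ (∃ n : ℕ, Nonempty (T ≃g pathGraph n)) →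
      metricDim T =
        {v : V | deg T v = 1}.ncard -
          {v : V | 3 ≤ deg T v ∧ ∃ u : V, deg T u = 1 ∧
            ∀ w : V, 3 ≤ deg T w → w ≠ v → T.dist u v < T.dist u w}.ncard) ∧
    ((∃ n : ℕ, Nonempty (T ≃g pathGraph n)) → metricDim T = 1) := by
  constructor
  · intro hp
    have hM : ∃ m, 3 ≤ deg T m := by
      by_contra h
      push Not at h
      exact hp (path_of hT hcard (fun m => not_le.2 (h m)))
    obtain ⟨S, hS, hc⟩ := upper hT hM
    apply le_antisymm
    · exact Nat.sInf_le ⟨S, hS, hc⟩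
    · obtain ⟨S', hS', hc'⟩ := Nat.sInf_mem
        (s := {n | ∃ S : Set V, IsResolvingSet T S ∧ S.ncard = n}) ⟨_, S, hS, rfl⟩
      have := lower hT hM S' hS'
      rw [hc'] at this
      exact Nat.sub_le_iff_le_add.2 this
  · rintro ⟨n, ⟨f⟩⟩
    have hM := nomajor_of_path f
    obtain ⟨r, hr⟩ := ex_leaf hT hcard
    have hS : IsResolvingSet T {r} := by
      intro u v huv
      refine ⟨r, rfl, fun h => huv (dist_inj hT hM hr _ u v h rfl)⟩
    apply le_antisymm
    · exact Nat.sInf_le ⟨{r}, hS, Set.ncard_singleton r⟩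
    · obtain ⟨S', hS', hc'⟩ := Nat.sInf_mem
        (s := {n | ∃ S : Set V, IsResolvingSet T S ∧ S.ncard = n}) ⟨_, {r}, hS, rfl⟩
      obtain ⟨x, y, hxy⟩ := Fintype.one_lt_card_iff.1 hcard
      obtain ⟨z, hz, -⟩ := hS' x y hxy
      unfold metricDim
      rw [← hc']
      exact (Set.ncard_pos (Set.toFinite _)).2 ⟨z, hz⟩
end

section
/- Let G be a finite connected simple graph with at least five vertices. Then the metric dimension of the line graph L(G) satisfies ⌈log₂ Δ(G)⌉ ≤ μ(L(G)) ≤ |V(G)| − 2, where Δ(G) is the maximum degree of G. -/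
open SimpleGraph

variable {V : Type*}

lemma lg_reach_aux {V : Type*} {G : SimpleGraph V} {u v : V} (p : G.Walk u v) :
    ∀ e f : G.edgeSet, u ∈ (e : Sym2 V) → v ∈ (f : Sym2 V) → G.lineGraph.Reachable e f := by
  have base : ∀ (u : V) (e f : G.edgeSet), u ∈ (e : Sym2 V) → u ∈ (f : Sym2 V) →
      G.lineGraph.Reachable e f := by
    intro u e f he hf
    by_cases h : e = f
    · subst h; exact Reachable.refl _
    · exact (lineGraph_adj_iff_exists.2 ⟨h, u, he, hf⟩).reachable
  induction p with
  | nil => exact fun e f he hf => base _ e f he hf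
  | @cons a b c h p ih =>
    intro e f he hf
    exact (base a e ⟨s(a, b), h⟩ he (by simp)).trans (ih ⟨s(a, b), h⟩ f (by simp) hf)

lemma lg_reach {V : Type*} {G : SimpleGraph V} (hG : G.Connected) (e f : G.edgeSet) :
    G.lineGraph.Reachable e f := by
  obtain ⟨p⟩ := hG.preconnected (Quot.out e.1).1 (Quot.out f.1).1
  exact lg_reach_aux p e f (Sym2.out_fst_mem _) (Sym2.out_fst_mem _)

lemma lg_cross {V : Type*} {H : SimpleGraph V} {a b : V} (h : H.Reachable a b) (A : Set V)
    (ha : a ∈ A) (hb : b ∉ A) : ∃ p q, p ∈ A ∧ q ∉ A ∧ H.Adj p q := by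
  obtain ⟨w⟩ := h
  obtain ⟨d, _, h1, h2⟩ := w.exists_boundary_dart A ha hb
  exact ⟨_, _, h1, h2, d.adj⟩

lemma lg_exists_out {V : Type*} [Fintype V] (A : List V) (h : A.length < Fintype.card V) :
    ∃ q, q ∉ A := by
  classical
  by_contra! hc
  have : (Finset.univ : Finset V) ⊆ A.toFinset := fun q _ => by simpa using hc q
  have := Finset.card_le_card this
  have := A.toFinset_card_le
  rw [Finset.card_univ] at *
  omega

lemma lg_resolving {V : Type*} [Fintype V] (G : SimpleGraph V)
    (hconn : G.Connected) (hcard : 5 ≤ Fintype.card V) (H : SimpleGraph V) (hle : H ≤ G) (x : V)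
    (hr : ∀ a b, a ≠ x → b ≠ x → H.Reachable a b)
    (hc : (∃ c, c ≠ x ∧ ∀ v, v ≠ x → v ≠ c → H.Adj c v) ∨
      (∀ c, c ≠ x → ∃ v, v ≠ x ∧ v ≠ c ∧ ¬ G.Adj c v)) :
    IsResolvingSet G.lineGraph {e | (e : Sym2 V) ∈ H.edgeSet} := by
  intro e f hef
  by_contra! hcon
  have heS : (e : Sym2 V) ∉ H.edgeSet := fun h => by
    have := hcon e h
    rw [dist_self] at this
    exact hef ((lg_reach hconn f e).dist_eq_zero_iff.1 this.symm).symm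
  have hfS : (f : Sym2 V) ∉ H.edgeSet := fun h => by
    have := hcon f h
    rw [dist_self] at this
    exact hef ((lg_reach hconn e f).dist_eq_zero_iff.1 this)
  have key : ∀ p q, H.Adj p q →
      ((p ∈ (e : Sym2 V) ∨ q ∈ (e : Sym2 V)) ↔ (p ∈ (f : Sym2 V) ∨ q ∈ (f : Sym2 V))) := by
    have tr : ∀ (g : G.edgeSet) (hg : (g : Sym2 V) ∉ H.edgeSet) (p q) (h : H.Adj p q),
        G.lineGraph.dist g ⟨s(p, q), hle h⟩ = 1 ↔ (p ∈ (g : Sym2 V) ∨ q ∈ (g : Sym2 V)) := by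
      intro g hg p q h
      rw [dist_eq_one_iff_adj, lineGraph_adj_iff_exists]
      constructor
      · rintro ⟨_, v, h1, h2⟩
        rcases Sym2.mem_iff.1 h2 with rfl | rfl
        · exact Or.inl h1
        · exact Or.inr h1
      · intro h1
        refine ⟨?_, ?_⟩
        · rintro rfl; exact hg h
        · rcases h1 with h1 | h1
          · exact ⟨p, h1, by simp⟩
          · exact ⟨q, h1, by simp⟩
    intro p q h
    rw [← tr e heS p q h, ← tr f hfS p q h, hcon ⟨s(p, q), hle h⟩ h]
  clear hcon
  obtain ⟨e, he⟩ := e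
  obtain ⟨f, hf⟩ := f
  simp only [ne_eq, Subtype.mk.injEq] at hef heS hfS key
  -- shared case
  have shared : ∀ u v w, e = s(u, v) → f = s(u, w) → False := by
    rintro u v w rfl rfl
    rw [mem_edgeSet] at *
    have hvw : v ≠ w := by rintro rfl; exact hef rfl
    simp only [Sym2.mem_iff] at key
    obtain ⟨b, hb⟩ := lg_exists_out [v, w, x] (by simp; omega)
    simp only [List.mem_cons, List.not_mem_nil, or_false, not_or] at hb
    obtain ⟨a, ha, hax⟩ : ∃ a, (a = v ∨ a = w) ∧ a ≠ x := by
      by_cases h : v = x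
      · exact ⟨w, Or.inr rfl, fun h' => hvw (h.trans h'.symm)⟩
      · exact ⟨v, Or.inl rfl, h⟩
    obtain ⟨p, q, hp, hq, hpq⟩ := lg_cross (hr a b hax hb.2.2) {v, w}
      (by simpa using ha) (by simp; tauto)
    have k := key p q hpq
    have h1 := he.ne
    have h2 := hf.ne
    simp only [Set.mem_insert_iff, Set.mem_singleton_iff, not_or] at hp hq
    have s1 : ¬ H.Adj v u := fun h => heS h.symm
    have s2 : ¬ H.Adj w u := fun h => hfS h.symm
    grind
  induction e with | _ u v =>
  induction f with | _ w z =>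
  have e1 : u ≠ w := by rintro rfl; exact shared _ _ _ rfl rfl
  have e2 : u ≠ z := by rintro rfl; exact shared _ _ _ rfl Sym2.eq_swap
  have e3 : v ≠ w := by rintro rfl; exact shared _ _ _ Sym2.eq_swap rfl
  have e4 : v ≠ z := by rintro rfl; exact shared _ _ _ Sym2.eq_swap Sym2.eq_swap
  rw [mem_edgeSet] at *
  have huv := he.ne
  have hwz := hf.ne
  simp only [Sym2.mem_iff] at key
  have closed : ∀ p q, p ∈ ({u, v, w, z} : Set V) → q ∉ ({u, v, w, z} : Set V) →
      ¬ H.Adj p q := by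
    intro p q hp hq hpq
    have k := key p q hpq
    simp only [Set.mem_insert_iff, Set.mem_singleton_iff, not_or] at hp hq
    grind
  have all : ∀ b, b ≠ x → b ∈ ({u, v, w, z} : Set V) := by
    intro b hb
    by_contra hbA
    obtain ⟨a, ha, hax⟩ : ∃ a, a ∈ ({u, v, w, z} : Set V) ∧ a ≠ x := by
      by_cases h : u = x
      · exact ⟨v, by simp, fun h' => huv (h.trans h'.symm)⟩
      · exact ⟨u, by simp, h⟩
    obtain ⟨p, q, hp, hq, hpq⟩ := lg_cross (hr a b hax hb) _ ha hbA
    exact closed p q hp hq hpq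
  have hx : x ∉ ({u, v, w, z} : Set V) := by
    intro hx
    obtain ⟨b, hb⟩ := lg_exists_out [u, v, w, z] (by simp; omega)
    have hbA : b ∉ ({u, v, w, z} : Set V) := by simpa using hb
    exact hbA (all b (by rintro rfl; exact hbA hx))
  simp only [Set.mem_insert_iff, Set.mem_singleton_iff, not_or] at all hx closed
  obtain ⟨xu, xv, xw, xz⟩ := hx
  rcases hc with ⟨c, hcx, hcs⟩ | hnd
  · rcases all c hcx with rfl | rfl | rfl | rfl
    · exact heS (hcs _ (Ne.symm xv) huv.symm)
    · exact heS (hcs _ (Ne.symm xu) huv).symm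
    · exact hfS (hcs _ (Ne.symm xz) hwz.symm)
    · exact hfS (hcs _ (Ne.symm xw) hwz).symm
  · have dom : ∀ a b c d, (∀ b', b' ≠ x → b' = a ∨ b' = b ∨ b' = c ∨ b' = d) → a ≠ x →
        G.Adj a b → G.Adj a c → G.Adj a d → False := by
      intro a b c d hall hax h1 h2 h3
      obtain ⟨v', h4, h5, h6⟩ := hnd a hax
      rcases hall v' h4 with rfl | rfl | rfl | rfl
      · exact h5 rfl
      · exact h6 h1
      · exact h6 h2
      · exact h6 h3
    -- u is H-adjacent to at most one of w, z
    have final : ∀ w z, w ≠ z → u ≠ w → u ≠ z → v ≠ w → v ≠ z → x ≠ w → G.Adj w z →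
        ¬ H.Adj w z →
        (∀ b, b ≠ x → b = u ∨ b = v ∨ b = w ∨ b = z) →
        (∀ p q, (p = u ∨ p = v ∨ p = w ∨ p = z) → ¬ (q = u ∨ q = v ∨ q = w ∨ q = z) →
          ¬ H.Adj p q) → ¬ H.Adj u w := by
      intro w z hwz e1 e2 e3 e4 xw hwzG hwzH all closed huw
      obtain ⟨p, q, hp, hq, hpq⟩ := lg_cross (hr u v (Ne.symm xu) (Ne.symm xv)) {u, w}
        (by simp) (by simp; exact ⟨huv.symm, e3⟩)
      simp only [Set.mem_insert_iff, Set.mem_singleton_iff, not_or] at hp hq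
      have hq' : q = v ∨ q = z := by
        by_contra hq'
        exact closed p q (by tauto) (by tauto) hpq
      have hpG := hle hpq
      have huwG := hle huw
      rcases hp with rfl | rfl <;> rcases hq' with rfl | rfl
      · exact heS hpq
      · exact dom p v w q (all) (Ne.symm xu) he huwG hpG
      · exact dom p u q z (by intro b hb; have := all b hb; tauto) (Ne.symm xw)
          huwG.symm hpG hwzG
      · exact hwzH hpq
    have n1 := final w z hwz e1 e2 e3 e4 xw hf hfS all
      (fun p q hp hq => closed p q hp (by tauto))
    have n2 := final z w hwz.symm e2 e1 e4 e3 xz hf.symm (fun h => hfS h.symm)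
      (by intro b hb; have := all b hb; tauto)
      (fun p q hp hq => closed p q (by tauto) (by tauto))
    obtain ⟨p, q, hp, hq, hpq⟩ := lg_cross (hr u v (Ne.symm xu) (Ne.symm xv)) {u}
        (by simp) (by simp; exact huv.symm)
    simp only [Set.mem_singleton_iff] at hp hq
    subst hp
    have : q = v ∨ q = w ∨ q = z := by
      by_contra hq'
      exact closed p q (by tauto) (by tauto) hpq
    rcases this with rfl | rfl | rfl
    · exact heS hpq
    · exact n1 hpq
    · exact n2 hpq

lemma lg_exists_resolving {V : Type*} [Fintype V] (G : SimpleGraph V)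
    (hconn : G.Connected) (hcard : 5 ≤ Fintype.card V) :
    ∃ S, IsResolvingSet G.lineGraph S ∧ S.ncard ≤ Fintype.card V - 2 := by
  classical
  have : Nontrivial V := Fintype.one_lt_card_iff_nontrivial.1 (by omega)
  have trans : ∀ H : SimpleGraph V, H.edgeSet.ncard ≤ Fintype.card V - 2 →
      {e : G.edgeSet | (e : Sym2 V) ∈ H.edgeSet}.ncard ≤ Fintype.card V - 2 := by
    intro H h
    refine le_trans ?_ h
    exact Set.ncard_le_ncard_of_injOn Subtype.val (fun e he => he)
      (Subtype.val_injective.injOn) (Set.toFinite _)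
  obtain ⟨x, hx⟩ := hconn.exists_connected_induce_compl_singleton_of_finite_nontrivial
  by_cases hd : ∃ c, c ≠ x ∧ ∀ v, v ≠ x → v ≠ c → G.Adj c v
  · obtain ⟨c, hcx, hcv⟩ := hd
    let H : SimpleGraph V :=
      { Adj := fun a b => a ≠ b ∧ a ≠ x ∧ b ≠ x ∧ (a = c ∨ b = c)
        symm := ⟨fun a b h => ⟨h.1.symm, h.2.2.1, h.2.1, h.2.2.2.symm⟩⟩
        loopless := ⟨fun a h => h.1 rfl⟩ }
    have hHc : ∀ v, v ≠ x → v ≠ c → H.Adj c v :=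
      fun v h1 h2 => ⟨h2.symm, hcx, h1, Or.inl rfl⟩
    have hrc : ∀ v, v ≠ x → H.Reachable c v := fun v h => by
      by_cases h2 : v = c
      · subst h2; exact Reachable.refl _
      · exact (hHc v h h2).reachable
    refine ⟨_, lg_resolving G hconn hcard H ?_ x (fun a b ha hb => (hrc a ha).symm.trans (hrc b hb))
      (Or.inl ⟨c, hcx, hHc⟩), trans H ?_⟩
    · rintro a b ⟨h1, h2, h3, rfl | rfl⟩
      · exact hcv _ h3 h1.symm
      · exact (hcv _ h2 h1).symm
    · have : H.edgeSet ⊆ (((Finset.univ \ {x, c}).image (fun v => s(c, v)) : Finset _) :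
          Set (Sym2 V)) := by
        intro e he
        induction e with | _ a b =>
        obtain ⟨h1, h2, h3, rfl | rfl⟩ := he
        · simp only [Finset.coe_image, Set.mem_image]
          exact ⟨b, by simp [h3, h1.symm], rfl⟩
        · simp only [Finset.coe_image, Set.mem_image]
          exact ⟨a, by simp [h2, h1], Sym2.eq_swap⟩
      have h := Set.ncard_le_ncard this (Finset.finite_toSet _)
      rw [Set.ncard_coe_finset] at h
      refine h.trans (Finset.card_image_le.trans ?_)
      rw [Finset.card_sdiff_of_subset (Finset.subset_univ _), Finset.card_univ,
        Finset.card_pair hcx.symm]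
  · push Not at hd
    obtain ⟨T, hTle, hT⟩ := hx.exists_isTree_le
    refine ⟨_, lg_resolving G hconn hcard (T.map (Function.Embedding.subtype _)) ?_ x ?_
      (Or.inr hd), trans _ ?_⟩
    · intro a b h
      obtain ⟨-, a', b', h', rfl, rfl⟩ := h
      exact hTle h'
    · intro a b ha hb
      exact (hT.connected.preconnected ⟨a, ha⟩ ⟨b, hb⟩).map
        (Embedding.map (Function.Embedding.subtype _) T).toHom
    · rw [edgeSet_map]
      refine (Set.ncard_image_le (Set.toFinite _)).trans ?_
      have h := hT.card_edgeFinset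
      rw [← coe_edgeFinset, Set.ncard_coe_finset]
      have h2 : Fintype.card (({x}ᶜ : Set V) : Type _) = Fintype.card V - 1 := by
        rw [Fintype.card_compl_set]; simp
      omega

lemma lg_lower {V : Type*} [Fintype V] (G : SimpleGraph V) (S : Set G.edgeSet)
    (hS : IsResolvingSet G.lineGraph S) (v : V) : deg G v ≤ 2 ^ S.ncard := by
  classical
  let φ : G.neighborSet v → (S → Bool) := fun w s =>
    decide (G.lineGraph.dist ⟨s(v, w), w.2⟩ s % 2 = 0)
  have hφ : Function.Injective φ := by
    intro a b hab
    by_contra hne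
    have hE : (⟨s(v, a), a.2⟩ : G.edgeSet) ≠ ⟨s(v, b), b.2⟩ := by
      intro h
      exact hne (Subtype.ext (Sym2.congr_right.1 (congrArg Subtype.val h)))
    obtain ⟨s, hs, hd⟩ := hS _ _ hE
    have hadj : G.lineGraph.Adj ⟨s(v, a), a.2⟩ ⟨s(v, b), b.2⟩ :=
      lineGraph_adj_iff_exists.2 ⟨hE, v, by simp, by simp⟩
    have h1 := congrFun hab ⟨s, hs⟩
    simp only [φ, decide_eq_decide] at h1
    have h2 := hadj.diff_dist_adj (u := s)
    rw [SimpleGraph.dist_comm, SimpleGraph.dist_comm (u := s)] at h2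
    omega
  have h := Nat.card_le_card_of_injective φ hφ
  rw [Nat.card_fun] at h
  rw [Nat.card_coe_set_eq, Nat.card_coe_set_eq, Nat.card_eq_fintype_card, Fintype.card_bool] at h
  exact h

/-- For a finite connected simple graph `G` with at least five vertices,
`⌈log₂ Δ(G)⌉ ≤ μ(L(G)) ≤ |V(G)| - 2`. -/
theorem metricDim_lineGraph_bounds {V : Type*} [Fintype V] (G : SimpleGraph V)
    (hconn : G.Connected) (hcard : 5 ≤ Fintype.card V) :
    Nat.clog 2 (maxDeg G) ≤ metricDim G.lineGraph ∧
      metricDim G.lineGraph ≤ Fintype.card V - 2 := by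
  obtain ⟨S, hS, hn⟩ := lg_exists_resolving G hconn hcard
  have hle : metricDim G.lineGraph ≤ S.ncard := Nat.sInf_le ⟨S, hS, rfl⟩
  refine ⟨?_, hle.trans hn⟩
  obtain ⟨S', hS', hn'⟩ := Nat.sInf_mem (s := {n | ∃ S, IsResolvingSet G.lineGraph S ∧
    S.ncard = n}) ⟨_, S, hS, rfl⟩
  change _ ≤ sInf _
  rw [← hn']
  apply Nat.clog_le_of_le_pow
  have : Nonempty V := hconn.nonempty
  refine csSup_le (Set.range_nonempty _) ?_
  rintro _ ⟨v, rfl⟩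
  exact lg_lower G S' hS' v
end
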